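/- Let X be a nonempty closed subset of ℝⁿ, H a properly constrained hypothesis on X, and Φ : X → ℝᵐ a constraint for H. Then Φ is a minimal constraint (0 lies in the interior of the convex hull of Φ(X)) if and only if Λ_Φ = {λ ∈ ℝᵐ : sup_{x∈X} λ·Φ(x) ≤ 1} is compact. More precisely, Φ is minimal if and only if there exists a finite matching set S* ⊆ X such that Λ_{Φ|S*} = {λ ∈ ℝᵐ : sup_{x∈S*} λ·Φ(x) ≤ 1} is compact; and if such S* exists, then Λ_{Φ|S} is compact for every S ⊆ X containing S*, and every closed S ⊆ X containing S* is a matching set for H. -/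

import Mathlib

open MeasureTheory Set ENNReal

noncomputable section

/-- The (topological) support of a Borel measure: the set of points all of whose open
neighbourhoods have positive measure. -/
def msupport {α : Type*} [TopologicalSpace α] [MeasurableSpace α]
    (P : Measure α) : Set α :=
  {x | ∀ U : Set α, IsOpen U → x ∈ U → 0 < P U}

variable {α : Type*} [TopologicalSpace α] [MeasurableSpace α] {X : Set α} {m : ℕ}

/-- A hypothesis on `X`: a nonempty set of Borel probability measures (on `X`,
identified with the Borel probability measures supported in `X`). -/
def IsHypothesis (H : Set (Measure X)) : Prop :=
  H.Nonempty ∧ ∀ P ∈ H, IsProbabilityMeasure P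

/-- An e-variable with respect to `H`: a Borel measurable nonnegative function whose
expectation is at most one under every `P ∈ H`. -/
def IsEVar (H : Set (Measure X)) (E : X → ℝ) : Prop :=
  Measurable E ∧ (∀ x, 0 ≤ E x) ∧ ∀ P ∈ H, ∫⁻ x, ENNReal.ofReal (E x) ∂P ≤ 1

/-- `f` majorises `g` if `f(x) ≥ g(x)` for every `x ∈ X`. -/
def Majorises (f g : X → ℝ) : Prop := ∀ x, g x ≤ f x

/-- A maximal e-variable: an e-variable with no strict majoriser among e-variables. -/
def IsMaximalEVar (H : Set (Measure X)) (E : X → ℝ) : Prop :=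
  IsEVar H E ∧ ¬ ∃ E', IsEVar H E' ∧ Majorises E' E ∧ E' ≠ E

/-- A majorising e-class: an e-class such that every e-variable is majorised by
one of its elements. -/
def IsMajorisingClass (H : Set (Measure X)) (C : Set (X → ℝ)) : Prop :=
  (∀ E ∈ C, IsEVar H E) ∧ ∀ E, IsEVar H E → ∃ E' ∈ C, Majorises E' E

/-- The optimal e-class: a majorising e-class contained in every majorising e-class. -/
def IsOptimalClass (H : Set (Measure X)) (C : Set (X → ℝ)) : Prop :=
  IsMajorisingClass H C ∧ ∀ C', IsMajorisingClass H C' → C ⊆ C'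

/-- `P ∈ P_Φ`: the expectation of the ℓ¹-norm of `Φ` under `P` is finite. -/
def MemPPhi (P : Measure X) (Φ : X → Fin m → ℝ) : Prop :=
  ∫⁻ x, ENNReal.ofReal (∑ i, |Φ x i|) ∂P < ⊤

/-- `Φ` is a constraint for `H`: `Φ` is continuous and `H` is exactly the set of Borel
probability measures `P ∈ P_Φ` with `⟨P, Φ⟩ = 0`. -/
def IsConstraint (H : Set (Measure X)) (Φ : X → Fin m → ℝ) : Prop :=
  Continuous Φ ∧
    H = {P : Measure X | IsProbabilityMeasure P ∧ MemPPhi P Φ ∧ ∫ x, Φ x ∂P = 0}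

/-- A proper constraint: a constraint such that `0` lies in the relative interior
of the convex hull of the image of `Φ`. -/
def IsProperConstraint (H : Set (Measure X)) (Φ : X → Fin m → ℝ) : Prop :=
  IsConstraint H Φ ∧
    (0 : Fin m → ℝ) ∈ intrinsicInterior ℝ (convexHull ℝ (Set.range Φ))

/-- A minimal constraint: a constraint such that `0` lies in the interior
of the convex hull of the image of `Φ`. -/
def IsMinimalConstraint (H : Set (Measure X)) (Φ : X → Fin m → ℝ) : Prop :=
  IsConstraint H Φ ∧
    (0 : Fin m → ℝ) ∈ interior (convexHull ℝ (Set.range Φ))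

/-- A finitely constrained hypothesis: one admitting a constraint. -/
def FinitelyConstrained (H : Set (Measure X)) : Prop :=
  ∃ (m : ℕ) (Φ : X → Fin m → ℝ), IsConstraint H Φ

/-- A properly constrained hypothesis: one admitting a proper constraint. -/
def ProperlyConstrained (H : Set (Measure X)) : Prop :=
  ∃ (m : ℕ) (Φ : X → Fin m → ℝ), IsProperConstraint H Φ

/-- `Λ_{Φ|S} = {λ ∈ ℝᵐ : sup_{x ∈ S} λ·Φ(x) ≤ 1}`. -/
def LambdaSet (Φ : X → Fin m → ℝ) (S : Set X) : Set (Fin m → ℝ) :=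
  {l | ∀ x ∈ S, ∑ i, l i * Φ x i ≤ 1}

/-- The dual e-class `E_H^∨ = {1 - λ·Φ : λ ∈ Λ_Φ}`. -/
def dualClass (Φ : X → Fin m → ℝ) : Set (X → ℝ) :=
  {E | ∃ l ∈ LambdaSet Φ Set.univ, E = fun x => 1 - ∑ i, l i * Φ x i}

/-- A matching set for `H`: a closed set that is exactly the support of some `P ∈ H`. -/
def IsMatchingSet (H : Set (Measure X)) (S : Set X) : Prop :=
  IsClosed S ∧ ∃ P ∈ H, msupport P = S

end

/-! A nonzero linear functional that is nonpositive on `Φ(S)` spans a ray inside the one-sided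
polar of `Φ(S)`, and by Hahn–Banach such a functional exists whenever `0` is not interior to the
convex hull of `Φ(S)`. Conversely, a hull that is a neighbourhood of `0` has a bounded polar.

If `0` is interior to the hull and `S` is closed, then `S` is a matching set: take a countable
family of Dirac masses dense in `S`, reweighted by `exp (-‖Φ‖)` to obtain a probability measure `Q`
with support `S` that integrates `Φ`. The origin lies strictly between the `Q`-mean of `Φ` and some
point of the hull, which is the mean of `Φ` under a measure carried by `S`; the corresponding
mixture has support `S` and mean `0`. A finite `S` can be chosen because finitely many points of
`Φ(X)` already surround `0`. -/

section ConvexGeometry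

theorem exists_mem_openSegment_of_mem_interior {V : Type*} [AddCommGroup V] [Module ℝ V]
    [TopologicalSpace V] [IsTopologicalAddGroup V] [ContinuousSMul ℝ V] {s : Set V} {x : V}
    (hx : x ∈ interior s) (q : V) : ∃ y ∈ s, x ∈ openSegment ℝ q y := by
  obtain ⟨t, hts, ht : 1 < t⟩ := ((eventually_homothety_mem_of_mem_interior ℝ q hx).filter_mono
    nhdsWithin_le_nhds |>.and (self_mem_nhdsWithin (s := Ioi 1))).exists
  have ht0 : 0 < t := one_pos.trans ht
  refine ⟨_, hts, ?_⟩
  have hxt : AffineMap.lineMap q (AffineMap.homothety q t x) t⁻¹ = x := by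
    simp [AffineMap.lineMap_apply, AffineMap.homothety_apply, smul_smul, ht0.ne']
  rw [openSegment_eq_image_lineMap]
  exact ⟨t⁻¹, ⟨inv_pos.2 ht0, inv_lt_one_of_one_lt₀ ht⟩, hxt⟩

variable {E : Type*} [NormedAddCommGroup E] [NormedSpace ℝ E]

/-- The one-sided polar of `s`: the functionals bounded above by `1` on `s`. Unlike the absolute
polar `StrongDual.polar`, it is unbounded as soon as `s` lies on one side of a hyperplane through
the origin. For `s = Φ(S)` this is a coordinate-free version of `Λ_{Φ|S}`. -/
def oneSidedPolar (s : Set E) : Set (StrongDual ℝ E) :=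
  {f | ∀ y ∈ s, f y ≤ 1}

theorem isClosed_oneSidedPolar (s : Set E) : IsClosed (oneSidedPolar s) := by
  simp only [oneSidedPolar, Set.ofPred_forall]
  exact isClosed_biInter fun y _ => isClosed_le (by fun_prop) continuous_const

theorem oneSidedPolar_convexHull (s : Set E) :
    oneSidedPolar (convexHull ℝ s) = oneSidedPolar s := by
  refine Subset.antisymm (fun f hf y hy => hf y (subset_convexHull ℝ s hy)) fun f hf => ?_
  exact convexHull_min hf (convex_halfSpace_le f.isLinear 1)

theorem isBounded_oneSidedPolar_of_mem_nhds_zero {s : Set E} (hs : s ∈ nhds 0) :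
    Bornology.IsBounded (oneSidedPolar s) := by
  have hs_symm : s ∩ -s ∈ nhds (0 : E) :=
    Filter.inter_mem hs (neg_mem_nhds_zero E hs)
  refine (NormedSpace.isBounded_polar_of_mem_nhds_zero ℝ hs_symm).subset fun f hf y hy => ?_
  exact abs_le'.2 ⟨hf y hy.1, by simpa using hf (-y) hy.2⟩

theorem smul_mem_oneSidedPolar {s : Set E} {f : StrongDual ℝ E} (hf : ∀ y ∈ s, f y ≤ 0)
    {t : ℝ} (ht : 0 ≤ t) : t • f ∈ oneSidedPolar s :=
  fun y hy => (mul_nonpos_of_nonneg_of_nonpos ht (hf y hy)).trans zero_le_one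

theorem eq_zero_of_forall_smul_mem_of_isBounded {s : Set E} (hs : Bornology.IsBounded s) {x : E}
    (hx : ∀ t : ℝ, 0 ≤ t → t • x ∈ s) : x = 0 := by
  obtain ⟨C, hC_pos, hC⟩ := hs.exists_pos_norm_lt
  by_contra hne
  have hlt := hC _ (hx (C / ‖x‖) (by positivity))
  rw [norm_smul, Real.norm_of_nonneg (by positivity), div_mul_cancel₀ _ (norm_ne_zero_iff.2 hne)]
    at hlt
  exact hlt.false

variable [FiniteDimensional ℝ E]

theorem exists_dual_ne_zero_eqOn_const_of_interior_eq_empty {s : Set E} (hs : Convex ℝ s)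
    (hint : interior s = ∅) {c : E} (hc : c ∈ s) :
    ∃ f : StrongDual ℝ E, f ≠ 0 ∧ ∀ y ∈ s, f y = f c := by
  have hspan : vectorSpan ℝ s < ⊤ := by
    rw [lt_top_iff_ne_top, ← direction_affineSpan, Ne,
      AffineSubspace.direction_eq_top_iff_of_nonempty ⟨c, subset_affineSpan ℝ s hc⟩,
      ← hs.interior_nonempty_iff_affineSpan_eq_top]
    exact not_nonempty_iff_eq_empty.2 hint
  obtain ⟨f, hf, hker⟩ := Submodule.exists_le_ker_of_lt_top _ hspan
  refine ⟨f.toContinuousLinearMap, by simpa using hf, fun y hy => ?_⟩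
  have hyc : f (y - c) = 0 := hker (vsub_mem_vectorSpan ℝ hy hc)
  simpa [sub_eq_zero] using hyc

theorem exists_dual_ne_zero_le_of_notMem_interior {s : Set E} (hs : Convex ℝ s)
    (hne : s.Nonempty) {x : E} (hx : x ∉ interior s) :
    ∃ f : StrongDual ℝ E, f ≠ 0 ∧ ∀ y ∈ s, f y ≤ f x := by
  rcases (interior s).eq_empty_or_nonempty with hint | hint
  · obtain ⟨c, hc⟩ := hne
    obtain ⟨f, hf, hconst⟩ := exists_dual_ne_zero_eqOn_const_of_interior_eq_empty hs hint hc
    rcases le_total (f c) (f x) with hle | hle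
    · exact ⟨f, hf, fun y hy => (hconst y hy).trans_le hle⟩
    · exact ⟨-f, neg_ne_zero.2 hf, fun y hy => neg_le_neg (hle.trans_eq (hconst y hy).symm)⟩
  · exact geometric_hahn_banach_of_nonempty_interior_point hs hx hint

theorem isCompact_oneSidedPolar_iff {s : Set E} (hs : s.Nonempty) :
    IsCompact (oneSidedPolar s) ↔ (0 : E) ∈ interior (convexHull ℝ s) := by
  constructor
  · intro hcompact
    by_contra h0
    obtain ⟨f, hf, hle⟩ :=
      exists_dual_ne_zero_le_of_notMem_interior (convex_convexHull ℝ s) hs.convexHull h0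
    have hle' : ∀ y ∈ s, f y ≤ 0 := fun y hy => by simpa using hle y (subset_convexHull ℝ s hy)
    exact hf <| eq_zero_of_forall_smul_mem_of_isBounded hcompact.isBounded
      fun t ht => smul_mem_oneSidedPolar hle' ht
  · intro h0
    rw [← oneSidedPolar_convexHull]
    exact Metric.isCompact_of_isClosed_isBounded (isClosed_oneSidedPolar _)
      (isBounded_oneSidedPolar_of_mem_nhds_zero (mem_interior_iff_mem_nhds.1 h0))

theorem exists_finite_subset_mem_interior_convexHull {s : Set E} {x : E}
    (hx : x ∈ interior (convexHull ℝ s)) :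
    ∃ t ⊆ s, t.Finite ∧ x ∈ interior (convexHull ℝ t) := by
  obtain ⟨b, hxb, hbs⟩ := exists_mem_interior_convexHull_affineBasis
    (mem_interior_iff_mem_nhds.1 hx)
  have hvertex : ∀ i, ∃ t : Finset E, ↑t ⊆ s ∧ b i ∈ convexHull ℝ (t : Set E) := fun i => by
    simpa only [mem_iUnion, exists_prop, convexHull_eq_union_convexHull_finite_subsets s]
      using hbs (subset_convexHull ℝ _ (mem_range_self i))
  choose t hts hbt using hvertex
  refine ⟨⋃ i, t i, iUnion_subset hts, finite_iUnion fun i => (t i).finite_toSet,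
    interior_mono (convexHull_min ?_ (convex_convexHull ℝ _)) hxb⟩
  rintro _ ⟨i, rfl⟩
  exact convexHull_mono (subset_iUnion (fun i => (t i : Set E)) i) (hbt i)

end ConvexGeometry

section Support

variable {α : Type*} [TopologicalSpace α] [MeasurableSpace α]

theorem msupport_eq_support (P : Measure α) : msupport P = P.support := by
  rw [Measure.support_eq_forall_isOpen]
  exact ext fun x => forall_congr' fun U => forall_comm

theorem support_smul_of_ne_zero {c : ℝ≥0∞} (hc : c ≠ 0) (P : Measure α) :
    (c • P).support = P.support :=
  Subset.antisymm Measure.smul_absolutelyContinuous.support_mono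
    (Measure.absolutelyContinuous_smul hc).support_mono

variable [OpensMeasurableSpace α]

theorem support_sum_dirac {ι : Type*} (u : ι → α) :
    (Measure.sum fun i => Measure.dirac (u i)).support = closure (range u) := by
  ext x
  rw [(nhds_basis_opens x).mem_measureSupport, mem_closure_iff]
  refine forall_congr' fun U => ⟨fun h hU hxU => ?_, fun h ⟨hxU, hU⟩ => ?_⟩
  · by_contra hempty
    have hu : ∀ i, u i ∉ U := fun i hi => hempty ⟨u i, hi, mem_range_self i⟩
    have hzero : Measure.sum (fun i => Measure.dirac (u i)) U = 0 := by
      simp [Measure.sum_apply_eq_zero' hU.measurableSet, Measure.dirac_apply' _ hU.measurableSet,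
        hu]
    exact (h ⟨hxU, hU⟩).ne' hzero
  · obtain ⟨_, hiU, i, rfl⟩ := h hU hxU
    calc (0 : ℝ≥0∞) < Measure.dirac (u i) U := by
          simp [Measure.dirac_apply' _ hU.measurableSet, hiU]
      _ ≤ Measure.sum (fun i => Measure.dirac (u i)) U := Measure.le_sum _ i U

theorem exists_sFinite_support_eq [SecondCountableTopology α] {S : Set α} (hS : IsClosed S) :
    ∃ μ : Measure α, SFinite μ ∧ μ.support = S := by
  obtain ⟨t, ht_countable, ht_dense⟩ := TopologicalSpace.exists_countable_dense S
  have := ht_countable.to_subtype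
  refine ⟨Measure.sum fun x : t => Measure.dirac (x : α), inferInstance, ?_⟩
  rw [support_sum_dirac, ← image_eq_range, hS.isClosedEmbedding_subtypeVal.closure_image_eq,
    ht_dense.closure_eq, image_univ, Subtype.range_val]

end Support

section Means

variable {α E : Type*} [MeasurableSpace α] [NormedAddCommGroup E]

theorem exists_isProbabilityMeasure_integrable (μ : Measure α) [SFinite μ] [NeZero μ] {f : α → E}
    (hf : AEStronglyMeasurable f μ) :
    ∃ Q : Measure α, IsProbabilityMeasure Q ∧ Q ≪ μ ∧ μ ≪ Q ∧ Integrable f Q := by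
  have hf_finite : AEStronglyMeasurable f μ.toFinite := hf.mono_ac (toFinite_absolutelyContinuous μ)
  have hexp : Integrable (fun x => Real.exp (-‖f x‖)) μ.toFinite :=
    .of_bound (by fun_prop) 1 (.of_forall fun x => by simp)
  have hbound (x : α) : Real.exp (-‖f x‖) * ‖f x‖ ≤ 1 := by
    rw [Real.exp_neg, inv_mul_le_one₀ (Real.exp_pos _)]
    linarith [Real.add_one_le_exp ‖f x‖]
  have htilted : μ.toFinite.tilted (fun x => -‖f x‖) ≪ μ.toFinite :=
    tilted_absolutelyContinuous _ _
  refine ⟨μ.toFinite.tilted fun x => -‖f x‖, isProbabilityMeasure_tilted hexp,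
    htilted.trans (toFinite_absolutelyContinuous μ),
    (absolutelyContinuous_toFinite μ).trans (absolutelyContinuous_tilted hexp), ?_⟩
  rw [← integrable_norm_iff (hf_finite.mono_ac htilted), integrable_tilted_iff hexp]
  exact .of_bound (by fun_prop) 1 (.of_forall fun x => by simpa using hbound x)

theorem exists_isProbabilityMeasure_integrable_support_eq [TopologicalSpace α]
    [SecondCountableTopology α] [OpensMeasurableSpace α] {f : α → E} (hf : StronglyMeasurable f)
    {S : Set α} (hS : IsClosed S) (hS_ne : S.Nonempty) :
    ∃ Q : Measure α, IsProbabilityMeasure Q ∧ Integrable f Q ∧ Q.support = S := by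
  obtain ⟨μ, _, rfl⟩ := exists_sFinite_support_eq hS
  have : NeZero μ := ⟨Measure.nonempty_support_iff.1 hS_ne⟩
  obtain ⟨Q, hQ, hQμ, hμQ, hQi⟩ := exists_isProbabilityMeasure_integrable μ hf.aestronglyMeasurable
  exact ⟨Q, hQ, hQi, Subset.antisymm hQμ.support_mono hμQ.support_mono⟩

variable [NormedSpace ℝ E]

/-- `P` is a probability measure that integrates `f`, and `y` is the mean of `f` under `P`.
Integrability is part of the notion, so that the mean is never a junk value of the integral. -/
structure HasMean (P : Measure α) (f : α → E) (y : E) : Prop where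
  isProbabilityMeasure : IsProbabilityMeasure P
  integrable : Integrable f P
  integral_eq : ∫ x, f x ∂P = y

variable {f : α → E}

theorem HasMean.convexCombination {P Q : Measure α} {y z : E} (hP : HasMean P f y)
    (hQ : HasMean Q f z) {a b : ℝ} (ha : 0 ≤ a) (hb : 0 ≤ b) (hab : a + b = 1) :
    HasMean (ENNReal.ofReal a • P + ENNReal.ofReal b • Q) f (a • y + b • z) := by
  have := hP.isProbabilityMeasure
  have := hQ.isProbabilityMeasure
  have hPa : Integrable f (ENNReal.ofReal a • P) := hP.integrable.smul_measure ofReal_ne_top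
  have hQb : Integrable f (ENNReal.ofReal b • Q) := hQ.integrable.smul_measure ofReal_ne_top
  refine ⟨⟨?_⟩, hPa.add_measure hQb, ?_⟩
  · simp [← ofReal_add ha hb, hab]
  · rw [integral_add_measure hPa hQb, integral_smul_measure, integral_smul_measure,
      toReal_ofReal ha, toReal_ofReal hb, hP.integral_eq, hQ.integral_eq]

variable [CompleteSpace E]

theorem hasMean_dirac (hf : StronglyMeasurable f) (x : α) : HasMean (Measure.dirac x) f (f x) :=
  ⟨inferInstance, integrable_dirac' hf enorm_lt_top, integral_dirac' f x hf⟩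

theorem exists_hasMean_of_mem_convexHull (hf : StronglyMeasurable f) {S : Set α}
    (hS : MeasurableSet S) {y : E} (hy : y ∈ convexHull ℝ (f '' S)) :
    ∃ P : Measure α, HasMean P f y ∧ ∀ᵐ x ∂P, x ∈ S := by
  refine convexHull_min (t := {y | ∃ P : Measure α, HasMean P f y ∧ ∀ᵐ x ∂P, x ∈ S}) ?_ ?_ hy
  · rintro _ ⟨x, hx, rfl⟩
    exact ⟨Measure.dirac x, hasMean_dirac hf x, (ae_dirac_iff hS).2 hx⟩
  · rintro y ⟨P, hP, hPS⟩ z ⟨Q, hQ, hQS⟩ a b ha hb hab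
    exact ⟨_, hP.convexCombination hQ ha hb hab,
      ae_add_measure_iff.2 ⟨Measure.ae_smul_measure hPS _, Measure.ae_smul_measure hQS _⟩⟩

theorem exists_hasMean_support_eq [TopologicalSpace α] [SecondCountableTopology α]
    [OpensMeasurableSpace α] (hf : StronglyMeasurable f) {S : Set α} (hS : IsClosed S) {y : E}
    (hy : y ∈ interior (convexHull ℝ (f '' S))) :
    ∃ P : Measure α, HasMean P f y ∧ P.support = S := by
  have hS_ne : S.Nonempty := (convexHull_nonempty_iff.1 ⟨y, interior_subset hy⟩).of_image
  obtain ⟨Q, hQ, hQi, hQS⟩ :=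
    exists_isProbabilityMeasure_integrable_support_eq hf hS hS_ne
  obtain ⟨z, hz, a, b, ha, hb, hab, rfl⟩ :=
    exists_mem_openSegment_of_mem_interior hy (∫ x, f x ∂Q)
  obtain ⟨D, hD, hDS⟩ := exists_hasMean_of_mem_convexHull hf hS.measurableSet hz
  refine ⟨_, .convexCombination ⟨hQ, hQi, rfl⟩ hD ha.le hb.le hab, ?_⟩
  rw [Measure.support_add, support_smul_of_ne_zero (ofReal_pos.2 ha).ne',
    support_smul_of_ne_zero (ofReal_pos.2 hb).ne', hQS, union_eq_left]
  exact Measure.support_subset_of_isClosed hS hDS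

end Means

section Constraints

variable {α : Type*} {X : Set α} {m : ℕ} {Φ : X → Fin m → ℝ} {S : Set X}

theorem isCompact_lambdaSet_iff_isCompact_oneSidedPolar :
    IsCompact (LambdaSet Φ S) ↔ IsCompact (oneSidedPolar (Φ '' S)) := by
  let dual : (Fin m → ℝ) ≃L[ℝ] StrongDual ℝ (Fin m → ℝ) :=
    ((dotProductEquiv ℝ (Fin m)).trans LinearMap.toContinuousLinearMap).toContinuousLinearEquiv
  have hpreimage : LambdaSet Φ S = dual ⁻¹' oneSidedPolar (Φ '' S) := by
    ext l
    change _ ↔ ∀ y ∈ Φ '' S, dual l y ≤ 1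
    rw [forall_mem_image]
    rfl
  rw [hpreimage]
  exact dual.toHomeomorph.isCompact_preimage

theorem isCompact_lambdaSet_iff (hS : S.Nonempty) :
    IsCompact (LambdaSet Φ S) ↔ 0 ∈ interior (convexHull ℝ (Φ '' S)) :=
  isCompact_lambdaSet_iff_isCompact_oneSidedPolar.trans
    (isCompact_oneSidedPolar_iff (hS.image Φ))

variable [MeasurableSpace α] {H : Set (Measure X)}

theorem memPPhi_of_integrable {P : Measure X} (hΦ : Integrable Φ P) : MemPPhi P Φ :=
  (integrable_finsetSum _ fun i _ => (hΦ.eval i).abs).lintegral_lt_top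

variable [TopologicalSpace α]

namespace IsConstraint

variable [SecondCountableTopology α]

theorem nonempty_of_isMatchingSet (hΦ : IsConstraint H Φ) (hS : IsMatchingSet H S) :
    S.Nonempty := by
  obtain ⟨-, P, hP, rfl⟩ := hS
  have : IsProbabilityMeasure P := (hΦ.2 ▸ hP).1
  rw [msupport_eq_support]
  exact Measure.nonempty_support (IsProbabilityMeasure.ne_zero P)

variable [OpensMeasurableSpace α]

theorem isMatchingSet (hΦ : IsConstraint H Φ) (hS : IsClosed S)
    (h0 : 0 ∈ interior (convexHull ℝ (Φ '' S))) : IsMatchingSet H S := by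
  obtain ⟨P, hP, hPS⟩ := exists_hasMean_support_eq hΦ.1.stronglyMeasurable hS h0
  refine ⟨hS, P, ?_, msupport_eq_support P ▸ hPS⟩
  rw [hΦ.2]
  exact ⟨hP.isProbabilityMeasure, memPPhi_of_integrable hP.integrable, hP.integral_eq⟩

theorem exists_finite_isMatchingSet [T1Space α] (hΦ : IsConstraint H Φ)
    (h0 : 0 ∈ interior (convexHull ℝ (range Φ))) :
    ∃ S : Set X, IsMatchingSet H S ∧ S.Finite ∧ IsCompact (LambdaSet Φ S) := by
  obtain ⟨S, -, hS, h0S⟩ := exists_subset_image_finite_and.1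
    (image_univ (f := Φ) ▸ exists_finite_subset_mem_interior_convexHull h0)
  have hmatch := hΦ.isMatchingSet hS.isClosed h0S
  exact ⟨S, hmatch, hS, (isCompact_lambdaSet_iff (hΦ.nonempty_of_isMatchingSet hmatch)).2 h0S⟩

end IsConstraint

theorem statement17_general [T1Space α] [SecondCountableTopology α] [OpensMeasurableSpace α]
    (hX : X.Nonempty) (hΦ : IsConstraint H Φ) :
    (0 ∈ interior (convexHull ℝ (range Φ)) ↔ IsCompact (LambdaSet Φ univ)) ∧
    (0 ∈ interior (convexHull ℝ (range Φ)) ↔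
      ∃ Sstar : Set X, IsMatchingSet H Sstar ∧ Sstar.Finite ∧ IsCompact (LambdaSet Φ Sstar)) ∧
    ∀ Sstar : Set X, IsMatchingSet H Sstar → IsCompact (LambdaSet Φ Sstar) →
      (∀ S : Set X, Sstar ⊆ S → IsCompact (LambdaSet Φ S)) ∧
      ∀ S : Set X, IsClosed S → Sstar ⊆ S → IsMatchingSet H S := by
  have := hX.to_subtype
  have hinterior {Sstar S : Set X} (hmatch : IsMatchingSet H Sstar)
      (hcompact : IsCompact (LambdaSet Φ Sstar)) (hS : Sstar ⊆ S) :
      0 ∈ interior (convexHull ℝ (Φ '' S)) :=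
    interior_mono (convexHull_mono (image_mono hS)) <|
      (isCompact_lambdaSet_iff (hΦ.nonempty_of_isMatchingSet hmatch)).1 hcompact
  refine ⟨?_, ⟨hΦ.exists_finite_isMatchingSet, ?_⟩, fun Sstar hmatch hcompact =>
    ⟨fun S hS => ?_, fun S hS_closed hS => ?_⟩⟩
  · rw [isCompact_lambdaSet_iff univ_nonempty, image_univ]
  · rintro ⟨Sstar, hmatch, -, hcompact⟩
    exact image_univ (f := Φ) ▸ hinterior hmatch hcompact (subset_univ Sstar)
  · exact (isCompact_lambdaSet_iff ((hΦ.nonempty_of_isMatchingSet hmatch).mono hS)).2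
      (hinterior hmatch hcompact hS)
  · exact hΦ.isMatchingSet hS_closed (hinterior hmatch hcompact hS)

end Constraints

/-- a constraint `Φ` of a properly constrained hypothesis is minimal iff
`Λ_Φ` is compact; more precisely, iff there is a finite matching set `S*` with
`Λ_{Φ|S*}` compact; and if such `S*` exists then `Λ_{Φ|S}` is compact for every
`S ⊇ S*` and every closed `S ⊇ S*` is a matching set. -/
theorem statement17 {n m : ℕ} {X : Set (EuclideanSpace ℝ (Fin n))}
    (hXc : IsClosed X) (hXne : X.Nonempty)
    (H : Set (Measure X)) (hHne : H.Nonempty) (hpc : ProperlyConstrained H)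
    (Φ : X → Fin m → ℝ) (hΦ : IsConstraint H Φ) :
    ((0 : Fin m → ℝ) ∈ interior (convexHull ℝ (Set.range Φ)) ↔
        IsCompact (LambdaSet Φ Set.univ)) ∧
    ((0 : Fin m → ℝ) ∈ interior (convexHull ℝ (Set.range Φ)) ↔
        ∃ Sstar : Set X, IsMatchingSet H Sstar ∧ Sstar.Finite ∧
          IsCompact (LambdaSet Φ Sstar)) ∧
    (∀ Sstar : Set X, IsMatchingSet H Sstar → Sstar.Finite →
        IsCompact (LambdaSet Φ Sstar) →
      (∀ S : Set X, Sstar ⊆ S → IsCompact (LambdaSet Φ S)) ∧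
      (∀ S : Set X, IsClosed S → Sstar ⊆ S → IsMatchingSet H S)) :=
  let ⟨hminimal, hfinite, hextend⟩ := statement17_general hXne hΦ
  ⟨hminimal, hfinite, fun Sstar hmatch _ => hextend Sstar hmatch⟩
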